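/- Let μ be an ergodic translation-invariant Gibbs measure for the 1-2 model on the hexagonal lattice ℍ (with any weights a, b, c > 0), and let 𝒩_{001}(ω) denote the number of infinite {001}-clusters of ω. Then for every integer k with 1 < k < ∞, μ({ω : 𝒩_{001}(ω) = k}) = 0. -/

import Mathlib

open MeasureTheory

/-- Vertices of the hexagonal lattice: `(x, y, t)` with `t = true` the "upper" vertex. -/
abbrev HexV : Type := ℤ × ℤ × Bool

/-- Edges of the hexagonal lattice: `(x, y, k)` with `k = 0` the a-type (horizontal) edge
joining `(x,y,1)` to `(x,y,0)`, `k = 1` the b-type edge joining `(x,y,1)` to `(x+1,y,0)`,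
`k = 2` the c-type edge joining `(x,y,1)` to `(x,y+1,0)`. -/
abbrev HexE : Type := ℤ × ℤ × Fin 3

/-- A configuration assigns present/absent to each edge. -/
abbrev Config : Type := HexE → Bool

def end1 (e : HexE) : HexV := (e.1, e.2.1, true)

def end2 (e : HexE) : HexV :=
  if e.2.2 = 0 then (e.1, e.2.1, false)
  else if e.2.2 = 1 then (e.1 + 1, e.2.1, false)
  else (e.1, e.2.1 + 1, false)

/-- The edges incident to a vertex, indexed so that index `0` is the a-type (horizontal)
edge, index `1` the b-type edge, index `2` the c-type edge. -/
def edgesAt (v : HexV) : Fin 3 → HexE := fun i =>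
  if v.2.2 then (v.1, v.2.1, i)
  else if i = 0 then (v.1, v.2.1, 0)
  else if i = 1 then (v.1 - 1, v.2.1, 1)
  else (v.1, v.2.1 - 1, 2)

/-- Local configuration of `ω` at `v`: digit `0` (rightmost) is the a-type edge,
digit `1` the b-type edge, digit `2` (leftmost) the c-type edge. -/
def localConf (ω : Config) (v : HexV) : Fin 3 → Bool := fun i => ω (edgesAt v i)

/-- A 1-2 model configuration: every vertex is incident to one or two present edges. -/
def IsConfig (ω : Config) : Prop :=
  ∀ v : HexV,
    1 ≤ (Finset.univ.filter fun i : Fin 3 => localConf ω v i = true).card ∧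
    (Finset.univ.filter fun i : Fin 3 => localConf ω v i = true).card ≤ 2

/-- The local configuration type `{001}` : only the a-type (horizontal) edge is present. -/
def conf001 : Fin 3 → Bool := ![true, false, false]

/-- The six admissible local configuration types `{001},…,{110}`. -/
def validConf (τ : Fin 3 → Bool) : Prop :=
  τ ≠ ![false, false, false] ∧ τ ≠ ![true, true, true]

/-- Vertex weight: `w(001)=w(110)=a`, `w(010)=w(101)=b`, `w(011)=w(100)=c`. -/
def weight (a b c : ℝ) (f : Fin 3 → Bool) : ℝ :=
  match f 2, f 1, f 0 with
  | false, false, true  => a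
  | true,  true,  false => a
  | false, true,  false => b
  | true,  false, true  => b
  | false, true,  true  => c
  | true,  false, false => c
  | false, false, false => 0
  | true,  true,  true  => 0

/-- Adjacency in the hexagonal lattice. -/
def HexAdj (v w : HexV) : Prop :=
  v ≠ w ∧ ∃ e : HexE, (v = end1 e ∨ v = end2 e) ∧ (w = end1 e ∨ w = end2 e)

/-- Adjacency restricted to a vertex set `S`. -/
def adjIn (S : Set HexV) (v w : HexV) : Prop := HexAdj v w ∧ v ∈ S ∧ w ∈ S

/-- The connected component of `v` in the subgraph induced on `S`. -/
def compOf (S : Set HexV) (v : HexV) : Set HexV := {w | Relation.ReflTransGen (adjIn S) v w}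

/-- `C` is a connected component of the subgraph induced on `S`. -/
def IsCompOf (S : Set HexV) (C : Set HexV) : Prop := ∃ v ∈ S, C = compOf S v

/-- Vertices whose local configuration equals `τ`. -/
def confSet (ω : Config) (τ : Fin 3 → Bool) : Set HexV := {v | localConf ω v = τ}

/-- A `τ`-cluster of `ω`. -/
def IsCluster (ω : Config) (τ : Fin 3 → Bool) (C : Set HexV) : Prop :=
  IsCompOf (confSet ω τ) C

/-- The number of infinite `τ`-clusters of `ω`, as an extended natural number. -/
noncomputable def numInfClusters (ω : Config) (τ : Fin 3 → Bool) : ℕ∞ :=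
  {C : Set HexV | IsCluster ω τ C ∧ C.Infinite}.encard

def endsFinset (e : HexE) : Finset HexV := {end1 e, end2 e}

/-- Vertices incident to an edge of `F`. -/
def verts (F : Finset HexE) : Finset HexV := F.biUnion endsFinset

/-- Edges sharing an endpoint with an edge of `F`. -/
def edgeNbhd (F : Finset HexE) : Set HexE :=
  {e' | ∃ e ∈ F,
    end1 e = end1 e' ∨ end1 e = end2 e' ∨ end2 e = end1 e' ∨ end2 e = end2 e'}

/-- Cylinder event: configurations agreeing with `σ` on `S`. -/
def cyl (S : Set HexE) (σ : Config) : Set Config := {ω | ∀ e ∈ S, ω e = σ e}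

/-- A Gibbs measure for the 1-2 model with weights `a`, `b`, `c`. -/
def IsGibbs (a b c : ℝ) (μ : Measure Config) : Prop :=
  IsProbabilityMeasure μ ∧ μ {ω | IsConfig ω} = 1 ∧
  ∀ F : Finset HexE, ∀ σ τ : Config, IsConfig σ → IsConfig τ →
    (∀ e ∉ F, σ e = τ e) →
    μ (cyl (↑F ∪ edgeNbhd F) σ) *
        ENNReal.ofReal (∏ v ∈ verts F, weight a b c (localConf τ v)) =
      μ (cyl (↑F ∪ edgeNbhd F) τ) *
        ENNReal.ofReal (∏ v ∈ verts F, weight a b c (localConf σ v))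

/-- Translation of edges by `g ∈ ℤ²`. -/
def shiftE (g : ℤ × ℤ) (e : HexE) : HexE := (e.1 + g.1, e.2.1 + g.2, e.2.2)

/-- Induced translation action on configurations. -/
def shiftConfig (g : ℤ × ℤ) (ω : Config) : Config := fun e => ω (shiftE g e)

/-- Translation invariance of a measure on configurations. -/
def TransInvariant (μ : Measure Config) : Prop :=
  ∀ g : ℤ × ℤ, μ.map (shiftConfig g) = μ

/-- Ergodicity: every translation-invariant measurable event has measure `0` or `1`. -/
def IsErgodicTI (μ : Measure Config) : Prop :=
  ∀ A : Set Config, MeasurableSet A → (∀ g, shiftConfig g ⁻¹' A = A) → μ A = 0 ∨ μ A = 1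

/-- The box `B_n(i,j)`. -/
def box (n : ℕ) (i j : ℤ) : Set HexV :=
  {v | |v.1 - i| ≤ (n : ℤ) ∧ |v.2.1 - j| ≤ (n : ℤ)}

/-- Vertices outside `B` adjacent to a vertex of `B`. -/
def outerBoundary (B : Set HexV) : Set HexV := {v | v ∉ B ∧ ∃ w ∈ B, HexAdj v w}

/-- `B_N(i,j)` is an encounter box for `ω` with respect to the infinite `{001}`-cluster `C`. -/
def IsEncounterBoxWrt (ω : Config) (N : ℕ) (i j : ℤ) (C : Set HexV) : Prop :=
  IsCluster ω conf001 C ∧ C.Infinite ∧ box N i j ⊆ C ∧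
  (∀ D, IsCompOf (C \ box (N + 2) i j) D → D.Infinite) ∧
  {D : Set HexV | IsCompOf (C \ box (N + 2) i j) D ∧ D.Infinite}.encard = 3

/-- `B_N(i,j)` is an encounter box for `ω`. -/
def IsEncounterBox (ω : Config) (N : ℕ) (i j : ℤ) : Prop :=
  ∃ C : Set HexV, IsEncounterBoxWrt ω N i j C

/-- A 3-partition of `Y`: an unordered triple of pairwise disjoint nonempty sets with union `Y`. -/
def IsThreePartition {α : Type*} (Y : Set α) (P : Set (Set α)) : Prop :=
  ∃ P₁ P₂ P₃ : Set α, P = {P₁, P₂, P₃} ∧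
    P₁.Nonempty ∧ P₂.Nonempty ∧ P₃.Nonempty ∧
    Disjoint P₁ P₂ ∧ Disjoint P₁ P₃ ∧ Disjoint P₂ P₃ ∧
    P₁ ∪ P₂ ∪ P₃ = Y

/-- Two 3-partitions are compatible if their parts can be ordered so that `Q₂ ∪ Q₃ ⊆ P₁`. -/
def CompatiblePartitions {α : Type*} (P Q : Set (Set α)) : Prop :=
  ∃ P₁ ∈ P, ∃ Q₁ ∈ Q, ∀ R ∈ Q, R ≠ Q₁ → R ⊆ P₁

/-!
Suppose that almost surely there are exactly `k` infinite `{001}`-clusters, with `1 < k < ∞`. Some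
finite box meets all of them. An infinite cluster contains an oblique edge, and by Poincaré
recurrence such edges occur arbitrarily far to the north-east and to the south-west of the box, so
that they can be used as the two acute corners of a large rectangle. Making exactly the horizontal
edges present inside this rectangle yields again a 1-2 model configuration: every vertex of the
rectangle has at least two edges inside it, one of them horizontal, except for one vertex at each
acute corner, where nothing changes because it is already of type `{001}`. In the new configuration
the `{001}`-vertices of the rectangle are connected, so all the infinite clusters have merged into
one. The Gibbs property makes this finite modification absolutely continuous, so at most one
infinite cluster has positive probability, contradicting `1 < k`.
-/

/-! ### Random sets and relations -/

section Measurability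

variable {Ω α : Type*} [MeasurableSpace Ω] [Countable α]

lemma measurable_reflTransGen {r : Ω → α → α → Prop} (hr : ∀ u v, Measurable fun ω => r ω u v)
    (u v : α) : Measurable fun ω => Relation.ReflTransGen (r ω) u v := by
  have measurable_isChain (l : List α) : ∀ u, Measurable fun ω => (u :: l).IsChain (r ω) := by
    induction l with
    | nil => simp
    | cons w l ih => simpa only [List.isChain_cons_cons] using fun u => (hr u w).and (ih w)
  have reflTransGen_iff (ω : Ω) : Relation.ReflTransGen (r ω) u v ↔
      ∃ l : List α, (u :: l).IsChain (r ω) ∧ (u :: l).getLast (List.cons_ne_nil u l) = v :=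
    ⟨List.exists_isChain_cons_of_relationReflTransGen,
      fun ⟨l, hl, hlast⟩ => List.relationReflTransGen_of_exists_isChain_cons l hl hlast⟩
  simp only [reflTransGen_iff]
  exact .exists fun l => (measurable_isChain l u).and measurable_const

lemma measurable_infinite {s : Ω → Set α} (hs : ∀ x, Measurable fun ω => x ∈ s ω) :
    Measurable fun ω => (s ω).Infinite := by
  simp only [← Set.encard_eq_top_iff]
  exact measurableSet_setOfPred.1
    ((measurable_encard.comp (measurable_set_iff.2 hs)) (measurableSet_singleton ⊤))

end Measurability

lemma natCast_le_encard_image_iff {α β : Type*} {f : α → β} {s : Set α} {n : ℕ} :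
    (n : ℕ∞) ≤ (f '' s).encard ↔
      ∃ t : Finset α, t.card = n ∧ ↑t ⊆ s ∧ Set.InjOn f t := by
  constructor
  · intro h
    obtain ⟨u, hus, hun⟩ := Set.exists_subset_encard_eq h
    obtain ⟨t, hts, ht⟩ := Set.SurjOn.exists_bijOn_subset hus
    have htn : t.encard = n := by rw [← ht.injOn.encard_image, ht.image_eq, hun]
    lift t to Finset α using Set.finite_of_encard_eq_coe htn
    exact ⟨t, by simpa using htn, hts, ht.injOn⟩
  · rintro ⟨t, rfl, hts, hf⟩
    rw [← Set.encard_coe_eq_coe_finsetCard, ← hf.encard_image]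
    exact Set.encard_le_encard (Set.image_mono hts)

/-! ### Measures on product spaces -/

lemma ext_of_cofinal_cylinders {ι α : Type*} [MeasurableSpace α] [Countable α]
    [MeasurableSingletonClass α] {μ ν : Measure (ι → α)} [IsFiniteMeasure μ]
    (h : ∀ I : Finset ι, ∃ J : Finset ι, I ⊆ J ∧ ∀ x : ι → α,
      μ ((J : Set ι).pi fun i => {x i}) = ν ((J : Set ι).pi fun i => {x i})) : μ = ν := by
  have marginal_eq (I : Finset ι) : ν.map I.restrict = μ.map I.restrict := by
    obtain ⟨J, hIJ, hJ⟩ := h I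
    have marginal_eq_of_cofinal : ν.map J.restrict = μ.map J.restrict := by
      refine Measure.ext_of_singleton fun p => ?_
      rw [Measure.map_apply J.measurable_restrict (measurableSet_singleton p),
        Measure.map_apply J.measurable_restrict (measurableSet_singleton p)]
      obtain h_empty | ⟨x, hx⟩ := (J.restrict ⁻¹' {p} : Set (ι → α)).eq_empty_or_nonempty
      · simp only [h_empty, measure_empty]
      · have : (J.restrict ⁻¹' {p} : Set (ι → α)) = (J : Set ι).pi fun i => {x i} := by
          ext y
          obtain rfl : J.restrict x = p := hx
          simp [funext_iff]
        rw [this, hJ]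
    rw [← Finset.restrict₂_comp_restrict hIJ,
      ← Measure.map_map (Finset.measurable_restrict₂ hIJ) J.measurable_restrict,
      marginal_eq_of_cofinal,
      Measure.map_map (Finset.measurable_restrict₂ hIJ) J.measurable_restrict]
  exact IsProjectiveLimit.unique (P := fun I => μ.map I.restrict) (fun _ => rfl) marginal_eq

lemma ae_forall_exists_le_of_measurePreserving {Ω G : Type*} [MeasurableSpace Ω] {μ : Measure Ω}
    [IsFiniteMeasure μ] [AddCommGroup G] [PartialOrder G] [IsOrderedAddMonoid G]
    [IsCodirectedOrder G] [Countable G] {T : G → Ω → Ω} (hT : ∀ g, MeasurePreserving (T g) μ μ)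
    (hadd : ∀ g h ω, T g (T h ω) = T (g + h) ω) {D : Set Ω} (hD : MeasurableSet D)
    (hvisit : ∀ᵐ ω ∂μ, ∃ g, T g ω ∈ D) : ∀ᵐ ω ∂μ, ∀ m, ∃ g, m ≤ g ∧ T g ω ∈ D := by
  let avoid (m : G) : Set Ω := {ω | ∀ g, m ≤ g → T g ω ∉ D}
  have measurable_avoid (m : G) : MeasurableSet (avoid m) :=
    measurableSet_setOfPred.2 <| .forall fun g => .imp measurable_const <|
      measurableSet_setOfPred.1 ((hT g).measurable hD.compl)
  have preimage_avoid (m h : G) : T h ⁻¹' avoid m = avoid (m + h) := by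
    ext ω
    simp only [avoid, Set.mem_preimage, Set.mem_ofPred_eq, hadd]
    exact ⟨fun H g hg => by simpa using H (g - h) (le_sub_iff_add_le.2 hg),
      fun H g hg => H (g + h) (by gcongr)⟩
  have measure_avoid (m m' : G) : μ (avoid m) = μ (avoid m') := by
    rw [← (hT (m' - m)).measure_preimage (measurable_avoid m).nullMeasurableSet, preimage_avoid,
      add_sub_cancel]
  have avoid_ae_eq_of_le {m m' : G} (h : m ≤ m') : avoid m =ᵐ[μ] avoid m' :=
    ae_eq_of_subset_of_measure_ge (fun ω hω g hg => hω g (h.trans hg)) (measure_avoid m' m).le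
      (measurable_avoid m).nullMeasurableSet (measure_ne_top μ _)
  have avoid_ae_eq (m m' : G) : avoid m =ᵐ[μ] avoid m' := by
    obtain ⟨l, hl, hl'⟩ := exists_le_le m m'
    exact (avoid_ae_eq_of_le hl).symm.trans (avoid_ae_eq_of_le hl')
  filter_upwards [hvisit, ae_all_iff.2 fun m => ae_all_iff.2 fun m' => (avoid_ae_eq m m').mem_iff]
    with ω ⟨g, hg⟩ h_iff m
  by_contra! h_avoid
  exact (h_iff m g).1 h_avoid g le_rfl hg

/-! ### Connected components of induced subgraphs -/

section Components

variable {S S' R : Set HexV} {u v w : HexV}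

lemma hexAdj_comm : HexAdj v w ↔ HexAdj w v := by
  simp only [HexAdj, ne_comm, and_comm]

lemma hexAdj_iff : HexAdj v w ↔
    ∃ e : HexE, v = end1 e ∧ w = end2 e ∨ v = end2 e ∧ w = end1 e := by
  have end1_ne_end2 (e : HexE) : end1 e ≠ end2 e := by
    unfold end1 end2
    split_ifs <;> simp
  constructor
  · rintro ⟨hne, e, rfl | rfl, rfl | rfl⟩
    · exact absurd rfl hne
    · exact ⟨e, .inl ⟨rfl, rfl⟩⟩
    · exact ⟨e, .inr ⟨rfl, rfl⟩⟩
    · exact absurd rfl hne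
  · rintro ⟨e, ⟨rfl, rfl⟩ | ⟨rfl, rfl⟩⟩
    · exact ⟨end1_ne_end2 e, e, .inl rfl, .inr rfl⟩
    · exact ⟨(end1_ne_end2 e).symm, e, .inr rfl, .inl rfl⟩

lemma hexAdj_upper_iff {x y : ℤ} : HexAdj (x, y, true) w ↔
    w = (x, y, false) ∨ w = (x + 1, y, false) ∨ w = (x, y + 1, false) := by
  constructor
  · rw [hexAdj_iff]
    rintro ⟨⟨x', y', i⟩, ⟨h, rfl⟩ | ⟨h, rfl⟩⟩
    · obtain ⟨rfl, rfl⟩ : x = x' ∧ y = y' := by simpa [end1] using h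
      fin_cases i <;> simp [end2]
    · unfold end2 at h
      split_ifs at h <;> simp at h
  · rintro (rfl | rfl | rfl)
    exacts [hexAdj_iff.2 ⟨(x, y, 0), .inl ⟨rfl, rfl⟩⟩, hexAdj_iff.2 ⟨(x, y, 1), .inl ⟨rfl, rfl⟩⟩,
      hexAdj_iff.2 ⟨(x, y, 2), .inl ⟨rfl, rfl⟩⟩]

lemma hexAdj_upper_a (x y : ℤ) : HexAdj (x, y, true) (x, y, false) :=
  hexAdj_upper_iff.2 (.inl rfl)

lemma hexAdj_upper_b (x y : ℤ) : HexAdj (x, y, true) (x + 1, y, false) :=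
  hexAdj_upper_iff.2 (.inr (.inl rfl))

lemma hexAdj_upper_c (x y : ℤ) : HexAdj (x, y, true) (x, y + 1, false) :=
  hexAdj_upper_iff.2 (.inr (.inr rfl))

lemma mem_compOf_iff : w ∈ compOf S v ↔ compOf S v = compOf S w := by
  have : Std.Symm (adjIn S) := ⟨fun _ _ ⟨h, hv, hw⟩ => ⟨hexAdj_comm.1 h, hw, hv⟩⟩
  refine ⟨fun h => ?_, fun h => h ▸ Relation.ReflTransGen.refl⟩
  ext u
  exact ⟨(symm_of (Relation.ReflTransGen (adjIn S)) h).trans,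
    Relation.ReflTransGen.trans h⟩

lemma compOf_eq_of_hexAdj (h : HexAdj v w) (hv : v ∈ S) (hw : w ∈ S) :
    compOf S v = compOf S w :=
  mem_compOf_iff.1 (.single ⟨h, hv, hw⟩)

lemma compOf_mono (h : S ⊆ S') (v : HexV) : compOf S v ⊆ compOf S' v :=
  fun _ hw => hw.lift id fun _ _ ⟨hadj, hu, hw⟩ => ⟨hadj, h hu, h hw⟩

lemma exists_adjIn_of_compOf_infinite (h : (compOf S v).Infinite) : ∃ w, adjIn S v w := by
  by_contra! h_isolated
  refine h ((Set.finite_singleton v).subset fun w hw => ?_)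
  obtain rfl | ⟨u, hvu, -⟩ := Relation.ReflTransGen.cases_head hw
  · rfl
  · exact absurd hvu (h_isolated u)

lemma compOf_subset (hv : v ∈ S) : compOf S v ⊆ S := by
  intro w hw
  obtain rfl | ⟨u, -, -, -, hw⟩ := Relation.ReflTransGen.cases_tail hw
  · exact hv
  · exact hw

lemma setOf_isCompOf_infinite :
    {C | IsCompOf S C ∧ C.Infinite} = compOf S '' {v | (compOf S v).Infinite} := by
  ext C
  constructor
  · rintro ⟨⟨v, -, rfl⟩, hC⟩
    exact ⟨v, hC, rfl⟩
  · rintro ⟨v, hv, rfl⟩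
    obtain ⟨w, -, hvS, -⟩ := exists_adjIn_of_compOf_infinite hv
    exact ⟨⟨v, hvS, rfl⟩, hv⟩

lemma numInfClusters_ne_zero_iff {ω : Config} {τ : Fin 3 → Bool} :
    numInfClusters ω τ ≠ 0 ↔ ∃ v, (compOf (confSet ω τ) v).Infinite := by
  simp only [numInfClusters, IsCluster, setOf_isCompOf_infinite, Set.encard_ne_zero,
    Set.image_nonempty]
  rfl

lemma exists_oblique_hexAdj_of_compOf_infinite (h : (compOf S v).Infinite) :
    ∃ x y, (x, y, true) ∈ S ∧ ((x + 1, y, false) ∈ S ∨ (x, y + 1, false) ∈ S) := by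
  by_contra! h_horizontal
  have step {u w : HexV} (huw : adjIn S u w) : (w.1, w.2.1) = (u.1, u.2.1) := by
    obtain ⟨hadj, hu, hw⟩ := huw
    have of_upper {x y : ℤ} {w : HexV} (hadj : HexAdj (x, y, true) w) (hu : (x, y, true) ∈ S)
        (hw : w ∈ S) : w = (x, y, false) := by
      obtain rfl | rfl | rfl := hexAdj_upper_iff.1 hadj
      · rfl
      · exact absurd hw (h_horizontal x y hu).1
      · exact absurd hw (h_horizontal x y hu).2
    obtain ⟨e, ⟨rfl, rfl⟩ | ⟨rfl, rfl⟩⟩ := hexAdj_iff.1 hadj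
    · rw [of_upper hadj hu hw, end1]
    · rw [of_upper (hexAdj_comm.1 hadj) hw hu, end1]
  have constant {w : HexV} (hw : w ∈ compOf S v) : (w.1, w.2.1) = (v.1, v.2.1) := by
    induction hw with
    | refl => rfl
    | tail _ huw ih => exact (step huw).trans ih
  refine h ((Set.finite_range fun t : Bool => (v.1, v.2.1, t)).subset fun w hw => ⟨w.2.2, ?_⟩)
  obtain ⟨h₁, h₂⟩ := Prod.mk.inj (constant hw)
  rw [← h₁, ← h₂]

lemma subsingleton_infinite_of_merge {b : HexV} (hSS' : S ⊆ S') (hS'R : S' \ R ⊆ S)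
    (hR : ∀ u ∈ R ∩ S', compOf S' u = compOf S' b)
    (h_meet : ∀ v, (compOf S v).Infinite → (compOf S v ∩ R).Nonempty) :
    {C | IsCompOf S' C ∧ C.Infinite}.Subsingleton := by
  have eq_hub {v : HexV} (hv : v ∈ S') (hinf : (compOf S' v).Infinite) :
      compOf S' v = compOf S' b := by
    by_cases hvR : (compOf S' v ∩ R).Nonempty
    · obtain ⟨u, huv, huR⟩ := hvR
      rw [mem_compOf_iff.1 huv, hR u ⟨huR, compOf_subset hv huv⟩]
    have avoid {u : HexV} (hu : u ∈ compOf S' v) : u ∉ R := fun huR => hvR ⟨u, hu, huR⟩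
    have subset_compOf : compOf S' v ⊆ compOf S v := by
      intro w hw
      induction hw with
      | refl => exact .refl
      | @tail u w hvu huw ih =>
        exact ih.tail ⟨huw.1, hS'R ⟨huw.2.1, avoid hvu⟩, hS'R ⟨huw.2.2, avoid (hvu.tail huw)⟩⟩
    obtain ⟨u, hu, huR⟩ := h_meet v (hinf.mono subset_compOf)
    exact absurd huR (avoid (compOf_mono hSS' v hu))
  rintro _ ⟨⟨v, hv, rfl⟩, hvinf⟩ _ ⟨⟨w, hw, rfl⟩, hwinf⟩
  rw [eq_hub hv hvinf, eq_hub hw hwinf]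

end Components

/-! ### Rectangles spanned by two corners -/

/-- `S` contains the lower vertex at `(x, y)` and one of its two oblique neighbours: `(x, y)` can
serve as the north-east corner of a rectangle to be filled. -/
def IsUpperCorner (S : Set HexV) (x y : ℤ) : Prop :=
  (x, y, false) ∈ S ∧ ((x - 1, y, true) ∈ S ∨ (x, y - 1, true) ∈ S)

/-- `S` contains the upper vertex at `(x, y)` and one of its two oblique neighbours: `(x, y)` can
serve as the south-west corner of a rectangle to be filled. -/
def IsLowerCorner (S : Set HexV) (x y : ℤ) : Prop :=
  (x, y, true) ∈ S ∧ ((x + 1, y, false) ∈ S ∨ (x, y + 1, false) ∈ S)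

lemma exists_isLowerCorner_of_compOf_infinite {S : Set HexV} {v : HexV}
    (h : (compOf S v).Infinite) : ∃ x y, IsLowerCorner S x y :=
  exists_oblique_hexAdj_of_compOf_infinite h

lemma exists_isUpperCorner_of_compOf_infinite {S : Set HexV} {v : HexV}
    (h : (compOf S v).Infinite) : ∃ x y, IsUpperCorner S x y := by
  obtain ⟨x, y, hxy, hb | hc⟩ := exists_oblique_hexAdj_of_compOf_infinite h
  · exact ⟨x + 1, y, hb, .inl (by rwa [add_sub_cancel_right])⟩
  · exact ⟨x, y + 1, hc, .inr (by rwa [add_sub_cancel_right])⟩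

/-- The vertices with coordinates in `[x₀, x₁] × [y₀, y₁]`. -/
noncomputable def rect (x₀ x₁ y₀ y₁ : ℤ) : Finset HexV :=
  Finset.Icc x₀ x₁ ×ˢ Finset.Icc y₀ y₁ ×ˢ Finset.univ

lemma mem_rect {x₀ x₁ y₀ y₁ x y : ℤ} {t : Bool} :
    (x, y, t) ∈ rect x₀ x₁ y₀ y₁ ↔ (x₀ ≤ x ∧ x ≤ x₁) ∧ y₀ ≤ y ∧ y ≤ y₁ := by
  simp [rect]

/-- `S` contains every vertex of a rectangle all of whose neighbours lie in the rectangle, and the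
rectangle is wide enough and has its two acute corners attached to the rest of it. -/
structure FillsRect (S : Set HexV) (x₀ x₁ y₀ y₁ : ℤ) : Prop where
  upper_mem : ∀ {x y}, x₀ ≤ x → x < x₁ → y₀ ≤ y → y < y₁ → (x, y, true) ∈ S
  lower_mem : ∀ {x y}, x₀ < x → x ≤ x₁ → y₀ < y → y ≤ y₁ → (x, y, false) ∈ S
  add_two_le_x : x₀ + 2 ≤ x₁
  add_two_le_y : y₀ + 2 ≤ y₁
  isUpperCorner : IsUpperCorner S x₁ y₁
  isLowerCorner : IsLowerCorner S x₀ y₀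

namespace FillsRect

variable {S : Set HexV} {x₀ x₁ y₀ y₁ x y : ℤ}

lemma compOf_interior (h : FillsRect S x₀ x₁ y₀ y₁) (hx₀ : x₀ < x) (hx₁ : x < x₁) (hy₀ : y₀ < y)
    (hy₁ : y < y₁) : compOf S (x, y, true) = compOf S (x₀ + 1, y₀ + 1, true) := by
  have := h.add_two_le_x
  have row : x < x₁ → compOf S (x, y, true) = compOf S (x₀ + 1, y, true) := by
    induction x, hx₀ using Int.leInduction with
    | base => exact fun _ => rfl
    | succ x hx₀ ih =>
      intro hx₁
      have lower := h.lower_mem (x := x + 1) (y := y) (by lia) (by lia) hy₀ hy₁.le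
      rw [← ih (by lia) (by lia),
        compOf_eq_of_hexAdj (hexAdj_upper_a _ _) (h.upper_mem (by lia) hx₁ hy₀.le hy₁) lower,
        compOf_eq_of_hexAdj (hexAdj_upper_b _ _)
          (h.upper_mem (by lia) (by lia) hy₀.le hy₁) lower]
  have column : y < y₁ → compOf S (x₀ + 1, y, true) = compOf S (x₀ + 1, y₀ + 1, true) := by
    clear row
    induction y, hy₀ using Int.leInduction with
    | base => exact fun _ => rfl
    | succ y hy₀ ih =>
      intro hy₁
      have lower := h.lower_mem (x := x₀ + 1) (y := y + 1) (by lia) (by lia) (by lia) hy₁.le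
      rw [← ih (by lia) (by lia),
        compOf_eq_of_hexAdj (hexAdj_upper_a _ _) (h.upper_mem (by lia) (by lia) (by lia) hy₁) lower,
        compOf_eq_of_hexAdj (hexAdj_upper_c _ _)
          (h.upper_mem (by lia) (by lia) (by lia) (by lia)) lower]
  rw [row hx₁, column hy₁]

lemma compOf_lower_of_interior (h : FillsRect S x₀ x₁ y₀ y₁) (hx₀ : x₀ < x) (hx₁ : x ≤ x₁)
    (hy₀ : y₀ < y) (hy₁ : y ≤ y₁) (hne : (x, y) ≠ (x₁, y₁)) :
    compOf S (x, y, false) = compOf S (x₀ + 1, y₀ + 1, true) := by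
  have := h.add_two_le_x
  have := h.add_two_le_y
  have via {x' y' : ℤ} (hadj : HexAdj (x', y', true) (x, y, false)) (hx₀' : x₀ < x')
      (hx₁' : x' < x₁) (hy₀' : y₀ < y') (hy₁' : y' < y₁) :
      compOf S (x, y, false) = compOf S (x₀ + 1, y₀ + 1, true) := by
    rw [← h.compOf_interior hx₀' hx₁' hy₀' hy₁', ← compOf_eq_of_hexAdj hadj
      (h.upper_mem hx₀'.le hx₁' hy₀'.le hy₁') (h.lower_mem hx₀ hx₁ hy₀ hy₁)]
  obtain rfl | hx₁ := hx₁.eq_or_lt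
  · have hy₁ : y < y₁ := hy₁.lt_of_ne fun h => hne (h ▸ rfl)
    exact via (hexAdj_upper_iff.2 (by simp)) (x' := x - 1) (by lia) (by lia) hy₀ hy₁
  obtain rfl | hy₁ := hy₁.eq_or_lt
  · exact via (hexAdj_upper_iff.2 (by simp)) (y' := y - 1) hx₀ hx₁ (by lia) (by lia)
  · exact via (hexAdj_upper_a x y) hx₀ hx₁ hy₀ hy₁

lemma compOf_upper (h : FillsRect S x₀ x₁ y₀ y₁) (hS : (x, y, true) ∈ S)
    (hR : (x, y, true) ∈ rect x₀ x₁ y₀ y₁) (hne₀ : (x, y) ≠ (x₀, y₀)) (hne₁ : (x, y) ≠ (x₁, y₁)) :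
    compOf S (x, y, true) = compOf S (x₀ + 1, y₀ + 1, true) := by
  obtain ⟨⟨hx₀, hx₁⟩, hy₀, hy₁⟩ := mem_rect.1 hR
  have := h.add_two_le_x
  have := h.add_two_le_y
  have via {x' y' : ℤ} (hadj : HexAdj (x, y, true) (x', y', false)) (hx₀' : x₀ < x')
      (hx₁' : x' ≤ x₁) (hy₀' : y₀ < y') (hy₁' : y' ≤ y₁) (hne : (x', y') ≠ (x₁, y₁)) :
      compOf S (x, y, true) = compOf S (x₀ + 1, y₀ + 1, true) := by
    rw [← h.compOf_lower_of_interior hx₀' hx₁' hy₀' hy₁' hne,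
      compOf_eq_of_hexAdj hadj hS (h.lower_mem hx₀' hx₁' hy₀' hy₁')]
  obtain rfl | hx₀ := hx₀.eq_or_lt
  · have hy₀ : y₀ < y := hy₀.lt_of_ne' fun h => hne₀ (h ▸ rfl)
    exact via (hexAdj_upper_b _ y) (by lia) (by lia) hy₀ hy₁ (by simp; lia)
  obtain rfl | hy₀ := hy₀.eq_or_lt
  · exact via (hexAdj_upper_c x _) hx₀ hx₁ (by lia) (by lia) (by simp; lia)
  · exact via (hexAdj_upper_a x y) hx₀ hx₁ hy₀ hy₁ hne₁

lemma compOf_lower (h : FillsRect S x₀ x₁ y₀ y₁) (hS : (x, y, false) ∈ S)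
    (hR : (x, y, false) ∈ rect x₀ x₁ y₀ y₁) (hne₀ : (x, y) ≠ (x₀, y₀)) (hne₁ : (x, y) ≠ (x₁, y₁)) :
    compOf S (x, y, false) = compOf S (x₀ + 1, y₀ + 1, true) := by
  obtain ⟨⟨hx₀, hx₁⟩, hy₀, hy₁⟩ := mem_rect.1 hR
  have := h.add_two_le_x
  have := h.add_two_le_y
  have via {x' y' : ℤ} (hadj : HexAdj (x', y', true) (x, y, false)) (hx₀' : x₀ ≤ x')
      (hx₁' : x' < x₁) (hy₀' : y₀ ≤ y') (hy₁' : y' < y₁) (hne : (x', y') ≠ (x₀, y₀)) :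
      compOf S (x, y, false) = compOf S (x₀ + 1, y₀ + 1, true) := by
    have hS' : (x', y', true) ∈ S := h.upper_mem hx₀' hx₁' hy₀' hy₁'
    rw [← compOf_eq_of_hexAdj hadj hS' hS, h.compOf_upper hS'
      (mem_rect.2 ⟨⟨hx₀', hx₁'.le⟩, hy₀', hy₁'.le⟩) hne (by simp; lia)]
  obtain rfl | hx₁ := hx₁.eq_or_lt
  · have hy₁ : y < y₁ := hy₁.lt_of_ne fun h => hne₁ (h ▸ rfl)
    exact via (hexAdj_upper_iff.2 (by simp)) (x' := x - 1) (by lia) (by lia) hy₀ hy₁ (by simp; lia)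
  obtain rfl | hy₁ := hy₁.eq_or_lt
  · exact via (hexAdj_upper_iff.2 (by simp)) (y' := y - 1) hx₀ hx₁ (by lia) (by lia) (by simp; lia)
  · exact via (hexAdj_upper_a x y) hx₀ hx₁ hy₀ hy₁ hne₀

lemma compOf_lower_upperCorner (h : FillsRect S x₀ x₁ y₀ y₁) :
    compOf S (x₁, y₁, false) = compOf S (x₀ + 1, y₀ + 1, true) := by
  have := h.add_two_le_x
  have := h.add_two_le_y
  obtain ⟨hS, hS' | hS'⟩ := h.isUpperCorner
  all_goals
    rw [← h.compOf_upper hS' (mem_rect.2 (by lia)) (by simp; lia) (by simp)]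
    exact (compOf_eq_of_hexAdj (hexAdj_upper_iff.2 (by simp)) hS' hS).symm

lemma compOf_upper_lowerCorner (h : FillsRect S x₀ x₁ y₀ y₁) :
    compOf S (x₀, y₀, true) = compOf S (x₀ + 1, y₀ + 1, true) := by
  have := h.add_two_le_x
  have := h.add_two_le_y
  obtain ⟨hS, hS' | hS'⟩ := h.isLowerCorner
  all_goals
    rw [← h.compOf_lower hS' (mem_rect.2 (by lia)) (by simp) (by simp; lia)]
    exact compOf_eq_of_hexAdj (hexAdj_upper_iff.2 (by simp)) hS hS'

theorem compOf_eq (h : FillsRect S x₀ x₁ y₀ y₁) :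
    ∀ v ∈ ↑(rect x₀ x₁ y₀ y₁) ∩ S, compOf S v = compOf S (x₀ + 1, y₀ + 1, true) := by
  rintro ⟨x, y, t⟩ ⟨hR, hS⟩
  have lower_eq_of_upper (hS' : (x, y, true) ∈ S) (hS : (x, y, false) ∈ S) :
      compOf S (x, y, true) = compOf S (x, y, false) :=
    compOf_eq_of_hexAdj (hexAdj_upper_a x y) hS' hS
  by_cases h₀ : (x, y) = (x₀, y₀)
  · obtain ⟨rfl, rfl⟩ := Prod.mk.inj h₀
    cases t
    · rw [← lower_eq_of_upper h.isLowerCorner.1 hS, h.compOf_upper_lowerCorner]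
    · exact h.compOf_upper_lowerCorner
  by_cases h₁ : (x, y) = (x₁, y₁)
  · obtain ⟨rfl, rfl⟩ := Prod.mk.inj h₁
    cases t
    · exact h.compOf_lower_upperCorner
    · rw [lower_eq_of_upper hS h.isUpperCorner.1, h.compOf_lower_upperCorner]
  · cases t
    · exact h.compOf_lower hS hR h₀ h₁
    · exact h.compOf_upper hS hR h₀ h₁

end FillsRect

/-! ### Filling a finite region with horizontal edges -/

section Filling

variable {V : Finset HexV} {ω : Config} {v : HexV} {e : HexE}

lemma edgesAt_type (v : HexV) (i : Fin 3) : (edgesAt v i).2.2 = i := by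
  obtain ⟨x, y, t⟩ := v
  cases t <;> fin_cases i <;> rfl

lemma exists_edgesAt_eq_iff : (∃ i, edgesAt v i = e) ↔ v = end1 e ∨ v = end2 e := by
  obtain ⟨⟨x, y, t⟩, x', y', i⟩ := v, e
  cases t <;> fin_cases i <;> simp [edgesAt, end1, end2, sub_eq_iff_eq_add, Fin.exists_fin_succ]

lemma validConf_iff {f : Fin 3 → Bool} :
    validConf f ↔ (∃ i, f i = true) ∧ ∃ i, f i = false := by
  unfold validConf
  revert f
  decide

lemma isConfig_iff : IsConfig ω ↔ ∀ v, validConf (localConf ω v) := by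
  have card_iff (f : Fin 3 → Bool) :
      (1 ≤ (Finset.univ.filter fun i => f i = true).card ∧
        (Finset.univ.filter fun i => f i = true).card ≤ 2) ↔ validConf f := by
    unfold validConf
    revert f
    decide
  simp only [IsConfig, card_iff]

lemma mem_confSet_conf001_iff :
    v ∈ confSet ω conf001 ↔ ∀ i, ω (edgesAt v i) = decide (i = 0) := by
  have conf001_eq : conf001 = fun i => decide (i = 0) := by decide
  rw [confSet, Set.mem_ofPred_eq, conf001_eq, funext_iff]
  rfl

/-- The edges with at least one endpoint in `V`. -/
def edgesAround (V : Finset HexV) : Finset HexE :=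
  V.biUnion fun v => Finset.univ.image (edgesAt v)

lemma mem_edgesAround : e ∈ edgesAround V ↔ end1 e ∈ V ∨ end2 e ∈ V := by
  simp [edgesAround, exists_edgesAt_eq_iff, and_or_left, exists_or]

/-- The edges with both endpoints in `V`. -/
def innerEdges (V : Finset HexV) : Finset HexE :=
  (edgesAround V).filter fun e => end1 e ∈ V ∧ end2 e ∈ V

lemma mem_innerEdges : e ∈ innerEdges V ↔ end1 e ∈ V ∧ end2 e ∈ V := by
  simp only [innerEdges, Finset.mem_filter, mem_edgesAround]
  tauto

lemma mem_of_edgesAt_mem_innerEdges {i : Fin 3} (h : edgesAt v i ∈ innerEdges V) : v ∈ V := by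
  obtain ⟨h₁, h₂⟩ := mem_innerEdges.1 h
  obtain h | h : v = end1 (edgesAt v i) ∨ v = end2 (edgesAt v i) :=
    exists_edgesAt_eq_iff.1 ⟨i, rfl⟩
  exacts [h ▸ h₁, h ▸ h₂]

/-- `ω` with its values on the edges of `F` replaced by those of `η`. -/
def overwrite (F : Finset HexE) (η ω : Config) : Config :=
  F.piecewise η ω

lemma overwrite_of_mem {F : Finset HexE} {η : Config} (h : e ∈ F) : overwrite F η ω e = η e :=
  Finset.piecewise_eq_of_mem _ _ _ h

lemma overwrite_of_notMem {F : Finset HexE} {η : Config} (h : e ∉ F) : overwrite F η ω e = ω e :=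
  Finset.piecewise_eq_of_notMem _ _ _ h

/-- The configuration whose present edges are exactly the horizontal ones. -/
def horizontalConfig : Config := fun e => decide (e.2.2 = 0)

/-- `ω` with the edges inside `V` overwritten by the all-horizontal pattern. -/
def fill (V : Finset HexV) (ω : Config) : Config :=
  overwrite (innerEdges V) horizontalConfig ω

lemma fill_edgesAt_of_mem {i : Fin 3} (h : edgesAt v i ∈ innerEdges V) :
    fill V ω (edgesAt v i) = decide (i = 0) := by
  rw [fill, overwrite_of_mem h, horizontalConfig, edgesAt_type]

lemma fill_of_notMem (h : e ∉ innerEdges V) : fill V ω e = ω e :=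
  overwrite_of_notMem h

lemma localConf_fill_of_notMem (hv : v ∉ V) : localConf (fill V ω) v = localConf ω v :=
  funext fun _ => fill_of_notMem fun h => hv (mem_of_edgesAt_mem_innerEdges h)

lemma confSet_subset_confSet_fill : confSet ω conf001 ⊆ confSet (fill V ω) conf001 := by
  intro v hv
  refine mem_confSet_conf001_iff.2 fun i => ?_
  by_cases h : edgesAt v i ∈ innerEdges V
  · exact fill_edgesAt_of_mem h
  · rw [fill_of_notMem h, mem_confSet_conf001_iff.1 hv]

lemma confSet_fill_diff_subset : confSet (fill V ω) conf001 \ V ⊆ confSet ω conf001 := by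
  rintro v ⟨hv, hvV⟩
  rwa [confSet, Set.mem_ofPred_eq, localConf_fill_of_notMem hvV] at hv

lemma isConfig_fill (hω : IsConfig ω)
    (h : ∀ v ∈ V, localConf (fill V ω) v = localConf ω v ∨
      edgesAt v 0 ∈ innerEdges V ∧ ∃ i ≠ 0, edgesAt v i ∈ innerEdges V) :
    IsConfig (fill V ω) := by
  refine isConfig_iff.2 fun v => ?_
  by_cases hv : v ∈ V
  · obtain h_eq | ⟨h_a, i, hi, h_i⟩ := h v hv
    · exact h_eq ▸ isConfig_iff.1 hω v
    · refine validConf_iff.2 ⟨⟨0, ?_⟩, i, ?_⟩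
      · exact fill_edgesAt_of_mem h_a
      · exact (fill_edgesAt_of_mem h_i).trans (decide_eq_false hi)
  · exact (localConf_fill_of_notMem hv).symm ▸ isConfig_iff.1 hω v

end Filling

section FillRect

variable {ω : Config} {x₀ x₁ y₀ y₁ : ℤ}

lemma fillsRect_confSet_fill (hx : x₀ + 2 ≤ x₁) (hy : y₀ + 2 ≤ y₁)
    (hup : IsUpperCorner (confSet ω conf001) x₁ y₁)
    (hlow : IsLowerCorner (confSet ω conf001) x₀ y₀) :
    FillsRect (confSet (fill (rect x₀ x₁ y₀ y₁) ω) conf001) x₀ x₁ y₀ y₁ where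
  upper_mem hx₀ hx₁ hy₀ hy₁ := mem_confSet_conf001_iff.2 fun i => fill_edgesAt_of_mem <| by
    fin_cases i <;> grind [edgesAt, mem_innerEdges, end1, end2, mem_rect]
  lower_mem hx₀ hx₁ hy₀ hy₁ := mem_confSet_conf001_iff.2 fun i => fill_edgesAt_of_mem <| by
    fin_cases i <;> grind [edgesAt, mem_innerEdges, end1, end2, mem_rect]
  add_two_le_x := hx
  add_two_le_y := hy
  isUpperCorner := hup.imp (confSet_subset_confSet_fill ·)
    (.imp (confSet_subset_confSet_fill ·) (confSet_subset_confSet_fill ·))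
  isLowerCorner := hlow.imp (confSet_subset_confSet_fill ·)
    (.imp (confSet_subset_confSet_fill ·) (confSet_subset_confSet_fill ·))

lemma isConfig_fill_rect (hω : IsConfig ω) (hup : IsUpperCorner (confSet ω conf001) x₁ y₁)
    (hlow : IsLowerCorner (confSet ω conf001) x₀ y₀) :
    IsConfig (fill (rect x₀ x₁ y₀ y₁) ω) := by
  have horizontal_inner {v : HexV} (hv : v ∈ rect x₀ x₁ y₀ y₁) :
      edgesAt v 0 ∈ innerEdges (rect x₀ x₁ y₀ y₁) := by
    obtain ⟨x, y, t⟩ := v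
    have := mem_rect.1 hv
    cases t <;> simpa [edgesAt, mem_innerEdges, end1, end2, mem_rect]
  have unchanged {v : HexV} (hv : v ∈ rect x₀ x₁ y₀ y₁) (ha : ω (edgesAt v 0) = true)
      (hbc : ∀ i ≠ 0, edgesAt v i ∉ innerEdges (rect x₀ x₁ y₀ y₁)) :
      localConf (fill (rect x₀ x₁ y₀ y₁) ω) v = localConf ω v := by
    funext i
    obtain rfl | hi := eq_or_ne i 0
    · exact (fill_edgesAt_of_mem (horizontal_inner hv)).trans ha.symm
    · exact fill_of_notMem (hbc i hi)
  refine isConfig_fill hω fun v hv => ?_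
  by_cases hbc : ∀ i ≠ 0, edgesAt v i ∉ innerEdges (rect x₀ x₁ y₀ y₁)
  · refine .inl (unchanged hv ?_ hbc)
    -- Only the two acute corners have no oblique edge inside the rectangle, and `ω` already has
    -- type `{001}` there.
    obtain ⟨x, y, t⟩ := v
    have hv := mem_rect.1 hv
    have hb := hbc 1 (by decide)
    have hc := hbc 2 (by decide)
    cases t
    · obtain ⟨rfl, rfl⟩ : x = x₀ ∧ y = y₀ := by
        grind [edgesAt, mem_innerEdges, end1, end2, mem_rect]
      exact mem_confSet_conf001_iff.1 hlow.1 0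
    · obtain ⟨rfl, rfl⟩ : x = x₁ ∧ y = y₁ := by
        grind [edgesAt, mem_innerEdges, end1, end2, mem_rect]
      exact mem_confSet_conf001_iff.1 hup.1 0
  · push Not at hbc
    exact .inr ⟨horizontal_inner hv, hbc⟩

theorem numInfClusters_fill_rect_le_one (hx : x₀ + 2 ≤ x₁) (hy : y₀ + 2 ≤ y₁)
    (hup : IsUpperCorner (confSet ω conf001) x₁ y₁)
    (hlow : IsLowerCorner (confSet ω conf001) x₀ y₀)
    (h_meet : ∀ v, (compOf (confSet ω conf001) v).Infinite →
      (compOf (confSet ω conf001) v ∩ rect x₀ x₁ y₀ y₁).Nonempty) :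
    numInfClusters (fill (rect x₀ x₁ y₀ y₁) ω) conf001 ≤ 1 :=
  Set.encard_le_one_iff_subsingleton.2 <|
    subsingleton_infinite_of_merge confSet_subset_confSet_fill confSet_fill_diff_subset
      (fillsRect_confSet_fill hx hy hup hlow).compOf_eq h_meet

lemma eventually_forall_infinite_compOf_inter_rect_nonempty {S : Set HexV}
    (hfin : {C | IsCompOf S C ∧ C.Infinite}.Finite) :
    ∀ᶠ n : ℤ in Filter.atTop, ∀ v, (compOf S v).Infinite →
      (compOf S v ∩ rect (-n) n (-n) n).Nonempty := by
  have h_all : ∀ᶠ n : ℤ in Filter.atTop, ∀ C ∈ {C | IsCompOf S C ∧ C.Infinite},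
      (C ∩ rect (-n) n (-n) n).Nonempty := by
    refine (Filter.eventually_all_finite hfin).2 fun C hC => ?_
    obtain ⟨⟨x, y, t⟩, hv⟩ := hC.2.nonempty
    filter_upwards [Filter.eventually_ge_atTop |x|, Filter.eventually_ge_atTop |y|] with n hx hy
    exact ⟨_, hv, mem_rect.2 ⟨abs_le.1 hx, abs_le.1 hy⟩⟩
  filter_upwards [h_all] with n h v hv
  exact h _ (setOf_isCompOf_infinite.ge ⟨v, hv, rfl⟩)

theorem exists_isConfig_fill_rect_numInfClusters_le_one (hω : IsConfig ω)
    (hfin : numInfClusters ω conf001 ≠ ⊤)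
    (hup : ∀ m : ℤ × ℤ, ∃ g, m ≤ g ∧ IsUpperCorner (confSet ω conf001) g.1 g.2)
    (hlow : ∀ m : ℤ × ℤ, ∃ g, g ≤ m ∧ IsLowerCorner (confSet ω conf001) g.1 g.2) :
    ∃ x₀ x₁ y₀ y₁, IsConfig (fill (rect x₀ x₁ y₀ y₁) ω) ∧
      numInfClusters (fill (rect x₀ x₁ y₀ y₁) ω) conf001 ≤ 1 := by
  obtain ⟨n, h_meet, hn⟩ := ((eventually_forall_infinite_compOf_inter_rect_nonempty
    (Set.encard_ne_top_iff.1 hfin)).and (Filter.eventually_ge_atTop 1)).exists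
  obtain ⟨⟨x₁, y₁⟩, ⟨hx₁, hy₁⟩, hup⟩ := hup (n, n)
  obtain ⟨⟨x₀, y₀⟩, ⟨hx₀, hy₀⟩, hlow⟩ := hlow (-n, -n)
  dsimp only at *
  have rect_subset : rect (-n) n (-n) n ⊆ rect x₀ x₁ y₀ y₁ := by
    unfold rect
    gcongr
  exact ⟨x₀, x₁, y₀, y₁, isConfig_fill_rect hω hup hlow,
    numInfClusters_fill_rect_le_one (by lia) (by lia) hup hlow fun v hv =>
      (h_meet v hv).mono (Set.inter_subset_inter_right _ rect_subset)⟩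

end FillRect

/-! ### Measurability of cluster counts -/

section ClusterMeasurability

variable {τ : Fin 3 → Bool}

lemma measurable_mem_confSet (v : HexV) : Measurable fun ω : Config => v ∈ confSet ω τ :=
  measurableSet_setOfPred.1 <|
    (measurable_pi_lambda (fun ω : Config => localConf ω v) fun _ => measurable_pi_apply _)
      (measurableSet_singleton τ)

lemma measurable_mem_compOf_confSet (v w : HexV) :
    Measurable fun ω : Config => w ∈ compOf (confSet ω τ) v :=
  measurable_reflTransGen (fun u w => .and measurable_const
    ((measurable_mem_confSet u).and (measurable_mem_confSet w))) v w

lemma measurableSet_natCast_le_numInfClusters (n : ℕ) :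
    MeasurableSet {ω : Config | (n : ℕ∞) ≤ numInfClusters ω τ} := by
  have le_iff (ω : Config) : (n : ℕ∞) ≤ numInfClusters ω τ ↔
      ∃ t : Finset HexV, t.card = n ∧ (∀ v ∈ t, (compOf (confSet ω τ) v).Infinite) ∧
        ∀ v ∈ t, ∀ w ∈ t, w ∈ compOf (confSet ω τ) v → v = w := by
    simp only [numInfClusters, IsCluster, setOf_isCompOf_infinite, natCast_le_encard_image_iff,
      mem_compOf_iff]
    rfl
  simp only [le_iff]
  refine measurableSet_setOfPred.2 <| .exists fun t => .and measurable_const <| .and ?_ ?_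
  · exact .forall fun v => .imp measurable_const <|
      measurable_infinite (measurable_mem_compOf_confSet v)
  · exact .forall fun v => .imp measurable_const <| .forall fun w => .imp measurable_const <|
      (measurable_mem_compOf_confSet v w).imp measurable_const

lemma measurableSet_numInfClusters_eq (k : ℕ) :
    MeasurableSet {ω : Config | numInfClusters ω τ = k} := by
  convert (measurableSet_natCast_le_numInfClusters (τ := τ) k).diff
    (measurableSet_natCast_le_numInfClusters (τ := τ) (k + 1)) using 1
  ext ω
  simp only [Set.mem_sdiff, Set.mem_ofPred_eq, Nat.cast_add, Nat.cast_one, not_le,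
    ENat.lt_add_one_iff (ENat.natCast_ne_top k), eq_comm (b := (k : ℕ∞)), le_antisymm_iff]

lemma measurable_isUpperCorner (x y : ℤ) :
    Measurable fun ω : Config => IsUpperCorner (confSet ω τ) x y :=
  (measurable_mem_confSet _).and ((measurable_mem_confSet _).or (measurable_mem_confSet _))

lemma measurable_isLowerCorner (x y : ℤ) :
    Measurable fun ω : Config => IsLowerCorner (confSet ω τ) x y :=
  (measurable_mem_confSet _).and ((measurable_mem_confSet _).or (measurable_mem_confSet _))

end ClusterMeasurability

/-! ### Translations -/

section Translations

variable {τ : Fin 3 → Bool}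

lemma compOf_preimage {S : Set HexV} (φ : HexV ≃ HexV)
    (hφ : ∀ v w, HexAdj (φ v) (φ w) ↔ HexAdj v w) (v : HexV) :
    compOf (φ ⁻¹' S) v = φ ⁻¹' compOf S (φ v) := by
  ext w
  constructor
  · exact fun h => h.lift φ fun u w ⟨hadj, hu, hw⟩ => ⟨(hφ u w).2 hadj, hu, hw⟩
  · intro h
    have lifted : Relation.ReflTransGen (adjIn (φ ⁻¹' S)) (φ.symm (φ v)) (φ.symm (φ w)) :=
      h.lift φ.symm fun u w ⟨hadj, hu, hw⟩ =>
        ⟨(hφ _ _).1 (by simpa using hadj), by simpa using hu, by simpa using hw⟩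
    rwa [φ.symm_apply_apply, φ.symm_apply_apply] at lifted

lemma encard_infinite_isCompOf_preimage {S : Set HexV} (φ : HexV ≃ HexV)
    (hφ : ∀ v w, HexAdj (φ v) (φ w) ↔ HexAdj v w) :
    {C | IsCompOf (φ ⁻¹' S) C ∧ C.Infinite}.encard = {C | IsCompOf S C ∧ C.Infinite}.encard := by
  have infinite_iff (v : HexV) :
      (φ ⁻¹' compOf S (φ v)).Infinite ↔ (compOf S (φ v)).Infinite := by
    rw [← φ.image_symm_eq_preimage, Set.infinite_image_iff φ.symm.injective.injOn]
  have image_eq : compOf (φ ⁻¹' S) '' {v | (compOf (φ ⁻¹' S) v).Infinite} =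
      Set.preimage φ '' (compOf S '' {v | (compOf S v).Infinite}) := by
    rw [Set.image_image, ← φ.surjective.image_preimage {v | (compOf S v).Infinite},
      Set.image_image]
    simp only [compOf_preimage φ hφ, infinite_iff]
    rfl
  rw [setOf_isCompOf_infinite, setOf_isCompOf_infinite, image_eq,
    (Set.preimage_injective.2 φ.surjective).encard_image]

/-- Translation of vertices by `g ∈ ℤ²`. -/
def shiftV (g : ℤ × ℤ) : HexV ≃ HexV where
  toFun v := (v.1 + g.1, v.2.1 + g.2, v.2.2)
  invFun v := (v.1 - g.1, v.2.1 - g.2, v.2.2)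
  left_inv v := by simp
  right_inv v := by simp

lemma hexAdj_shiftV_iff (g : ℤ × ℤ) (v w : HexV) :
    HexAdj (shiftV g v) (shiftV g w) ↔ HexAdj v w := by
  have shift_end1 (g : ℤ × ℤ) (e : HexE) : shiftV g (end1 e) = end1 (shiftE g e) := rfl
  have shift_end2 (g : ℤ × ℤ) (e : HexE) : shiftV g (end2 e) = end2 (shiftE g e) := by
    obtain ⟨x, y, i⟩ := e
    fin_cases i <;> simp [shiftV, shiftE, end2, add_right_comm]
  have shift {g : ℤ × ℤ} {v w : HexV} (h : HexAdj v w) : HexAdj (shiftV g v) (shiftV g w) := by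
    obtain ⟨e, ⟨rfl, rfl⟩ | ⟨rfl, rfl⟩⟩ := hexAdj_iff.1 h
    exacts [hexAdj_iff.2 ⟨shiftE g e, .inl ⟨shift_end1 g e, shift_end2 g e⟩⟩,
      hexAdj_iff.2 ⟨shiftE g e, .inr ⟨shift_end2 g e, shift_end1 g e⟩⟩]
  exact ⟨fun h => by simpa [shiftV] using shift (g := -g) h, shift⟩

lemma shiftE_edgesAt (g : ℤ × ℤ) (v : HexV) (i : Fin 3) :
    shiftE g (edgesAt v i) = edgesAt (shiftV g v) i := by
  obtain ⟨x, y, t⟩ := v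
  cases t <;> fin_cases i <;> simp [shiftE, shiftV, edgesAt, sub_add_eq_add_sub]

lemma shiftConfig_shiftConfig (g h : ℤ × ℤ) (ω : Config) :
    shiftConfig g (shiftConfig h ω) = shiftConfig (g + h) ω := by
  funext e
  simp only [shiftConfig, shiftE, Prod.fst_add, Prod.snd_add, add_assoc]

lemma confSet_shiftConfig (g : ℤ × ℤ) (ω : Config) :
    confSet (shiftConfig g ω) τ = shiftV g ⁻¹' confSet ω τ := by
  ext v
  have localConf_eq : localConf (shiftConfig g ω) v = localConf ω (shiftV g v) :=
    funext fun i => congrArg ω (shiftE_edgesAt g v i)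
  simp only [confSet, Set.mem_preimage, Set.mem_ofPred_eq, localConf_eq]

lemma numInfClusters_shiftConfig (g : ℤ × ℤ) (ω : Config) :
    numInfClusters (shiftConfig g ω) τ = numInfClusters ω τ := by
  simp only [numInfClusters, IsCluster, confSet_shiftConfig]
  exact encard_infinite_isCompOf_preimage (shiftV g) (hexAdj_shiftV_iff g)

lemma isUpperCorner_shiftConfig_iff (g : ℤ × ℤ) (ω : Config) :
    IsUpperCorner (confSet (shiftConfig g ω) τ) 0 0 ↔ IsUpperCorner (confSet ω τ) g.1 g.2 := by
  simp [IsUpperCorner, confSet_shiftConfig, shiftV, neg_add_eq_sub]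

lemma isLowerCorner_shiftConfig_iff (g : ℤ × ℤ) (ω : Config) :
    IsLowerCorner (confSet (shiftConfig g ω) τ) 0 0 ↔ IsLowerCorner (confSet ω τ) g.1 g.2 := by
  simp [IsLowerCorner, confSet_shiftConfig, shiftV, add_comm]

variable {μ : Measure Config}

lemma TransInvariant.measurePreserving (hTI : TransInvariant μ) (g : ℤ × ℤ) :
    MeasurePreserving (shiftConfig g) μ μ :=
  ⟨measurable_pi_lambda _ fun _ => measurable_pi_apply _, hTI g⟩

variable [IsFiniteMeasure μ]

lemma TransInvariant.ae_forall_exists_isUpperCorner (hTI : TransInvariant μ)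
    (h : ∀ᵐ ω ∂μ, ∃ v, (compOf (confSet ω τ) v).Infinite) :
    ∀ᵐ ω ∂μ, ∀ m : ℤ × ℤ, ∃ g, m ≤ g ∧ IsUpperCorner (confSet ω τ) g.1 g.2 := by
  simp only [← isUpperCorner_shiftConfig_iff]
  refine ae_forall_exists_le_of_measurePreserving hTI.measurePreserving shiftConfig_shiftConfig
    (measurableSet_setOfPred.2 (measurable_isUpperCorner 0 0)) ?_
  filter_upwards [h] with ω ⟨v, hv⟩
  obtain ⟨x, y, hxy⟩ := exists_isUpperCorner_of_compOf_infinite hv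
  exact ⟨(x, y), (isUpperCorner_shiftConfig_iff (x, y) ω).2 hxy⟩

lemma TransInvariant.ae_forall_exists_isLowerCorner (hTI : TransInvariant μ)
    (h : ∀ᵐ ω ∂μ, ∃ v, (compOf (confSet ω τ) v).Infinite) :
    ∀ᵐ ω ∂μ, ∀ m : ℤ × ℤ, ∃ g, g ≤ m ∧ IsLowerCorner (confSet ω τ) g.1 g.2 := by
  simp only [← isLowerCorner_shiftConfig_iff]
  have recurrence := ae_forall_exists_le_of_measurePreserving (T := fun g => shiftConfig (-g))
    (fun g => hTI.measurePreserving (-g))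
    (fun g h ω => by rw [shiftConfig_shiftConfig, neg_add])
    (measurableSet_setOfPred.2 (measurable_isLowerCorner (τ := τ) 0 0)) (by
      filter_upwards [h] with ω ⟨v, hv⟩
      obtain ⟨x, y, hxy⟩ := exists_isLowerCorner_of_compOf_infinite hv
      exact ⟨-(x, y), by simpa [isLowerCorner_shiftConfig_iff] using hxy⟩)
  filter_upwards [recurrence] with ω hω m
  obtain ⟨g, hg, hD⟩ := hω (-m)
  exact ⟨-g, neg_le.1 hg, hD⟩

end Translations

/-! ### Finite energy -/

/-- Finite energy: overwriting finitely many edges by a fixed pattern, wherever this gives a 1-2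
model configuration, maps `μ` to a measure absolutely continuous with respect to `μ`. -/
def FiniteEnergy (μ : Measure Config) : Prop :=
  ∀ (F : Finset HexE) (η : Config),
    (μ.restrict {ω | IsConfig (overwrite F η ω)}).map (overwrite F η) ≪ μ

lemma measurable_overwrite (F : Finset HexE) (η : Config) : Measurable (overwrite F η) :=
  measurable_pi_lambda _ fun e => by
    by_cases he : e ∈ F
    · simp only [overwrite_of_mem he, measurable_const]
    · simpa only [overwrite_of_notMem he] using measurable_pi_apply e

lemma measurableSet_isConfig : MeasurableSet {ω | IsConfig ω} := by
  simp only [isConfig_iff]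
  exact measurableSet_setOfPred.2 <| .forall fun v =>
    (measurable_of_finite validConf).comp (measurable_pi_lambda _ fun _ => measurable_pi_apply _)

lemma FiniteEnergy.ae_imp {μ : Measure Config} (hμ : FiniteEnergy μ) (F : Finset HexE)
    (η : Config) {P : Config → Prop} (hP : ∀ᵐ ω ∂μ, P ω) :
    ∀ᵐ ω ∂μ, IsConfig (overwrite F η ω) → P (overwrite F η ω) :=
  (ae_restrict_iff' (measurable_overwrite F η measurableSet_isConfig)).1 <|
    ae_of_ae_map (measurable_overwrite F η).aemeasurable ((hμ F η).ae_le hP)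

/-! ### Gibbs measures have finite energy -/

section Gibbs

variable {a b c : ℝ} {F G : Finset HexE} {V : Finset HexV} {α β σ : Config} {v : HexV}
  {N : Set HexE}

lemma mem_verts : v ∈ verts F ↔ ∃ i, edgesAt v i ∈ F := by
  simp only [verts, endsFinset, Finset.mem_biUnion, Finset.mem_insert, Finset.mem_singleton,
    ← exists_edgesAt_eq_iff]
  exact ⟨fun ⟨_, he, i, hi⟩ => ⟨i, hi ▸ he⟩, fun ⟨i, hi⟩ => ⟨_, hi, i, rfl⟩⟩

lemma verts_mono (h : F ⊆ G) : verts F ⊆ verts G :=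
  Finset.biUnion_subset_biUnion_of_subset_left _ h

lemma edgesAt_mem_edgesAround (hv : v ∈ V) (i : Fin 3) : edgesAt v i ∈ edgesAround V :=
  Finset.mem_biUnion.2 ⟨v, hv, Finset.mem_image_of_mem _ (Finset.mem_univ i)⟩

lemma coe_edgesAround_verts : (edgesAround (verts F) : Set HexE) = ↑F ∪ edgeNbhd F := by
  ext e
  simp only [edgeNbhd, Finset.mem_coe, mem_edgesAround, verts, endsFinset, Finset.mem_biUnion,
    Finset.mem_insert, Finset.mem_singleton, Set.mem_union, Set.mem_ofPred_eq]
  grind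

lemma subset_edgesAround_verts : F ⊆ edgesAround (verts F) :=
  Finset.coe_subset.1 (coe_edgesAround_verts ▸ Set.subset_union_left)

lemma edgesAround_mono {W : Finset HexV} (h : V ⊆ W) : edgesAround V ⊆ edgesAround W :=
  Finset.biUnion_subset_biUnion_of_subset_left _ h

lemma cyl_eq_pi : cyl N σ = N.pi fun e => {σ e} := rfl

lemma measurableSet_cyl : MeasurableSet (cyl N σ) :=
  .pi N.to_countable fun e _ => measurableSet_singleton (σ e)

lemma cyl_mem_nhds (hN : N.Finite) : cyl N σ ∈ nhds σ := by
  rw [cyl_eq_pi]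
  exact set_pi_mem_nhds hN fun e _ => mem_nhds_discrete.2 (Set.mem_singleton _)

lemma cyl_eq_cyl (h : α ∈ cyl N β) : cyl N α = cyl N β := by
  ext ω
  exact forall₂_congr fun e he => by rw [h e he]

lemma preimage_overwrite_cyl_inter_cyl {J N : Finset HexE} {η ζ : Config} (hFN : F ⊆ N)
    (hNJ : N ⊆ J) (hζ : ζ ∈ cyl N (overwrite F η σ)) :
    overwrite F η ⁻¹' cyl J ζ ∩ cyl N σ = cyl J (overwrite F σ ζ) := by
  refine Set.Subset.antisymm (fun ω hω e he => ?_) fun ω hω => ⟨fun e he => ?_, fun e he => ?_⟩ <;>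
    by_cases heF : e ∈ F
  · rw [overwrite_of_mem heF, hω.2 e (hFN heF)]
  · rw [overwrite_of_notMem heF, ← hω.1 e he, overwrite_of_notMem heF]
  · rw [hζ e (hFN heF), overwrite_of_mem heF, overwrite_of_mem heF]
  · rw [overwrite_of_notMem heF, hω e he, overwrite_of_notMem heF]
  · rw [hω e (hNJ he), overwrite_of_mem heF]
  · rw [hω e (hNJ he), overwrite_of_notMem heF, hζ e he, overwrite_of_notMem heF]

lemma weight_pos_iff (ha : 0 < a) (hb : 0 < b) (hc : 0 < c) {f : Fin 3 → Bool} :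
    0 < weight a b c f ↔ validConf f := by
  simp only [validConf_iff, weight, Fin.exists_fin_succ, Fin.exists_fin_zero]
  grind

/-- The Gibbs weight of `ω` restricted to the vertices in `V`. -/
noncomputable def localWeight (a b c : ℝ) (V : Finset HexV) (ω : Config) : ENNReal :=
  ∏ v ∈ V, ENNReal.ofReal (weight a b c (localConf ω v))

lemma localWeight_ne_zero_iff (ha : 0 < a) (hb : 0 < b) (hc : 0 < c) :
    localWeight a b c V σ ≠ 0 ↔ ∀ v ∈ V, validConf (localConf σ v) := by
  simp only [localWeight, Finset.prod_ne_zero_iff, ENNReal.ofReal_ne_zero_iff,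
    weight_pos_iff ha hb hc]

lemma localWeight_ne_top : localWeight a b c V σ ≠ ⊤ :=
  ENNReal.prod_ne_top fun _ _ => ENNReal.ofReal_ne_top

lemma localWeight_congr (h : α ∈ cyl (edgesAround V) β) :
    localWeight a b c V α = localWeight a b c V β :=
  Finset.prod_congr rfl fun v hv => by
    rw [show localConf α v = localConf β v from
      funext fun i => h _ (edgesAt_mem_edgesAround hv i)]

lemma localConf_congr_of_notMem_verts (h : ∀ e ∉ F, α e = β e) (hv : v ∉ verts F) :
    localConf α v = localConf β v :=
  funext fun i => h _ fun hi => hv (mem_verts.2 ⟨i, hi⟩)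

variable {μ : Measure Config}

lemma IsGibbs.ae_isConfig (hμ : IsGibbs a b c μ) : ∀ᵐ ω ∂μ, IsConfig ω :=
  have := hμ.1
  (prob_compl_eq_zero_iff measurableSet_isConfig).2 hμ.2.1

lemma IsGibbs.measure_cyl_mul_localWeight_of_isConfig (hμ : IsGibbs a b c μ) (ha : 0 < a)
    (hb : 0 < b) (hc : 0 < c) (hFG : F ⊆ G) (hα : IsConfig α) (hβ : IsConfig β)
    (h : ∀ e ∉ F, α e = β e) :
    μ (cyl (edgesAround (verts G)) α) * localWeight a b c (verts F) β =
      μ (cyl (edgesAround (verts G)) β) * localWeight a b c (verts F) α := by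
  have split (ω : Config) (hω : IsConfig ω) :
      ENNReal.ofReal (∏ v ∈ verts G, weight a b c (localConf ω v)) =
        localWeight a b c (verts F) ω * localWeight a b c (verts G \ verts F) ω := by
    rw [ENNReal.ofReal_prod_of_nonneg fun v _ =>
      ((weight_pos_iff ha hb hc).2 (isConfig_iff.1 hω v)).le, mul_comm]
    exact (Finset.prod_sdiff (verts_mono hFG)).symm
  have same_outside :
      localWeight a b c (verts G \ verts F) α = localWeight a b c (verts G \ verts F) β :=
    Finset.prod_congr rfl fun v hv => by
      rw [localConf_congr_of_notMem_verts h (Finset.mem_sdiff.1 hv).2]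
  have specification := hμ.2.2 G α β hα hβ fun e he => h e fun he' => he (hFG he')
  rw [← coe_edgesAround_verts, split α hα, split β hβ, same_outside, ← mul_assoc, ← mul_assoc]
    at specification
  refine (ENNReal.mul_left_inj ?_ localWeight_ne_top).1 specification
  exact (localWeight_ne_zero_iff ha hb hc).2 fun v _ => isConfig_iff.1 hβ v

lemma IsGibbs.measure_cyl_mul_localWeight (hμ : IsGibbs a b c μ) (ha : 0 < a)
    (hb : 0 < b) (hc : 0 < c) (hFG : F ⊆ G) (h : ∀ e ∉ F, α e = β e) :
    μ (cyl (edgesAround (verts G)) α) * localWeight a b c (verts F) β =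
      μ (cyl (edgesAround (verts G)) β) * localWeight a b c (verts F) α := by
  have F_subset : edgesAround (verts F) ⊆ edgesAround (verts G) :=
    edgesAround_mono (verts_mono hFG)
  have of_ne_zero {α β : Config} (h : ∀ e ∉ F, α e = β e)
      (hα : μ (cyl (edgesAround (verts G)) α) ≠ 0) (hβ : localWeight a b c (verts F) β ≠ 0) :
      μ (cyl (edgesAround (verts G)) α) * localWeight a b c (verts F) β =
        μ (cyl (edgesAround (verts G)) β) * localWeight a b c (verts F) α := by
    obtain ⟨α', hα', hα'_config⟩ :=
      Measure.exists_mem_of_measure_ne_zero_of_ae hα (ae_restrict_of_ae hμ.ae_isConfig)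
    have hβ' : overwrite F β α' ∈ cyl (edgesAround (verts G)) β := fun e he => by
      by_cases heF : e ∈ F
      · exact overwrite_of_mem heF
      · rw [overwrite_of_notMem heF, hα' e he, h e heF]
    have hβ'_config : IsConfig (overwrite F β α') := isConfig_iff.2 fun v => by
      by_cases hv : v ∈ verts F
      · rw [← localWeight_congr fun e he => hβ' e (F_subset he)] at hβ
        exact (localWeight_ne_zero_iff ha hb hc).1 hβ v hv
      · rw [localConf_congr_of_notMem_verts (fun e he => overwrite_of_notMem he) hv]
        exact isConfig_iff.1 hα'_config v
    rw [← cyl_eq_cyl hα', ← cyl_eq_cyl hβ', ← localWeight_congr fun e he => hα' e (F_subset he),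
      ← localWeight_congr fun e he => hβ' e (F_subset he)]
    exact hμ.measure_cyl_mul_localWeight_of_isConfig ha hb hc hFG hα'_config hβ'_config
      fun e he => (overwrite_of_notMem he).symm
  by_cases h_left : μ (cyl (edgesAround (verts G)) α) * localWeight a b c (verts F) β = 0
  · by_cases h_right : μ (cyl (edgesAround (verts G)) β) * localWeight a b c (verts F) α = 0
    · rw [h_left, h_right]
    · obtain ⟨hβ, hα⟩ := mul_ne_zero_iff.1 h_right
      exact (of_ne_zero (fun e he => (h e he).symm) hβ hα).symm
  · obtain ⟨hα, hβ⟩ := mul_ne_zero_iff.1 h_left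
    exact of_ne_zero h hα hβ

lemma IsGibbs.localWeight_smul_map_overwrite (hμ : IsGibbs a b c μ) (ha : 0 < a) (hb : 0 < b)
    (hc : 0 < c) (F : Finset HexE) (η σ : Config) :
    localWeight a b c (verts F) (overwrite F η σ) •
        (μ.restrict (cyl (edgesAround (verts F)) σ)).map (overwrite F η) =
      localWeight a b c (verts F) σ •
        μ.restrict (cyl (edgesAround (verts F)) (overwrite F η σ)) := by
  have := hμ.1
  have := Measure.smul_finite ((μ.restrict (cyl (edgesAround (verts F)) σ)).map (overwrite F η))
    (localWeight_ne_top (a := a) (b := b) (c := c) (V := verts F) (σ := overwrite F η σ))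
  refine ext_of_cofinal_cylinders fun I => ⟨edgesAround (verts (I ∪ F)),
    Finset.subset_union_left.trans subset_edgesAround_verts, fun ζ => ?_⟩
  have F_subset : edgesAround (verts F) ⊆ edgesAround (verts (I ∪ F)) :=
    edgesAround_mono (verts_mono Finset.subset_union_right)
  simp only [← cyl_eq_pi, Measure.smul_apply, smul_eq_mul,
    Measure.map_apply (measurable_overwrite F η) measurableSet_cyl,
    Measure.restrict_apply measurableSet_cyl,
    Measure.restrict_apply (measurable_overwrite F η measurableSet_cyl)]
  by_cases hζ : ζ ∈ cyl (edgesAround (verts F)) (overwrite F η σ)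
  · have source : overwrite F η ⁻¹' cyl (edgesAround (verts (I ∪ F))) ζ ∩
        cyl (edgesAround (verts F)) σ =
          cyl (edgesAround (verts (I ∪ F))) (overwrite F σ ζ) :=
      preimage_overwrite_cyl_inter_cyl subset_edgesAround_verts F_subset hζ
    have target : cyl (edgesAround (verts (I ∪ F))) ζ ∩
        cyl (edgesAround (verts F)) (overwrite F η σ) = cyl (edgesAround (verts (I ∪ F))) ζ :=
      Set.inter_eq_left.2 fun ω hω e he => (hω e (F_subset he)).trans (hζ e he)
    have weight_source :
        localWeight a b c (verts F) σ = localWeight a b c (verts F) (overwrite F σ ζ) :=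
      localWeight_congr fun e he => by
        by_cases heF : e ∈ F
        · rw [overwrite_of_mem heF]
        · rw [overwrite_of_notMem heF, hζ e he, overwrite_of_notMem heF]
    rw [source, target, ← localWeight_congr hζ, weight_source, mul_comm, mul_comm (localWeight ..)]
    exact hμ.measure_cyl_mul_localWeight ha hb hc Finset.subset_union_right
      fun e he => overwrite_of_notMem he
  · have source : overwrite F η ⁻¹' cyl (edgesAround (verts (I ∪ F))) ζ ∩
        cyl (edgesAround (verts F)) σ = ∅ :=
      Set.eq_empty_of_forall_notMem fun ω hω => hζ fun e he => by
        by_cases heF : e ∈ F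
        · rw [← hω.1 e (F_subset he), overwrite_of_mem heF, overwrite_of_mem heF]
        · rw [← hω.1 e (F_subset he), overwrite_of_notMem heF, overwrite_of_notMem heF, hω.2 e he]
    have target : cyl (edgesAround (verts (I ∪ F))) ζ ∩
        cyl (edgesAround (verts F)) (overwrite F η σ) = ∅ :=
      Set.eq_empty_of_forall_notMem fun ω hω => hζ fun e he =>
        (hω.1 e (F_subset he)).symm.trans (hω.2 e he)
    rw [source, target, measure_empty, mul_zero, mul_zero]

theorem IsGibbs.finiteEnergy (hμ : IsGibbs a b c μ) (ha : 0 < a) (hb : 0 < b) (hc : 0 < c) :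
    FiniteEnergy μ := by
  intro F η
  refine Measure.AbsolutelyContinuous.mk fun A hA hA_null => ?_
  rw [Measure.map_apply (measurable_overwrite F η) hA,
    Measure.restrict_apply (measurable_overwrite F η hA)]
  refine measure_null_of_locally_null _ fun σ ⟨_, hσ⟩ =>
    ⟨overwrite F η ⁻¹' A ∩ cyl (edgesAround (verts F)) σ, ?_, ?_⟩
  · exact Filter.inter_mem (Filter.mem_of_superset self_mem_nhdsWithin Set.inter_subset_left)
      (mem_nhdsWithin_of_mem_nhds (cyl_mem_nhds (Finset.finite_toSet _)))
  · have pushforward := congrArg (· A) (hμ.localWeight_smul_map_overwrite ha hb hc F η σ)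
    simp only [Measure.smul_apply, smul_eq_mul, Measure.map_apply (measurable_overwrite F η) hA,
      Measure.restrict_apply (measurable_overwrite F η hA),
      Measure.restrict_apply hA, measure_inter_null_of_null_left _ hA_null, mul_zero] at pushforward
    exact (mul_eq_zero.1 pushforward).resolve_left <|
      (localWeight_ne_zero_iff ha hb hc).2 fun v _ => isConfig_iff.1 hσ v

end Gibbs

/-! ### The number of infinite clusters -/

theorem no_finite_number_of_infinite_001_clusters_general {μ : Measure Config}
    [IsProbabilityMeasure μ] (hcfg : ∀ᵐ ω ∂μ, IsConfig ω) (hFE : FiniteEnergy μ)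
    (hTI : TransInvariant μ) (hErg : IsErgodicTI μ) {k : ℕ} (hk : 1 < k) :
    μ {ω : Config | numInfClusters ω conf001 = (k : ℕ∞)} = 0 := by
  refine (hErg _ (measurableSet_numInfClusters_eq k) fun g => ?_).resolve_right fun h_one => ?_
  · ext ω
    simp only [Set.mem_preimage, Set.mem_ofPred_eq, numInfClusters_shiftConfig]
  have eq_k : ∀ᵐ ω ∂μ, numInfClusters ω conf001 = k :=
    (prob_compl_eq_zero_iff (measurableSet_numInfClusters_eq k)).2 h_one
  have exists_infinite : ∀ᵐ ω ∂μ, ∃ v, (compOf (confSet ω conf001) v).Infinite := by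
    filter_upwards [eq_k] with ω hω
    have h_ne_zero : numInfClusters ω conf001 ≠ 0 := by
      rw [hω]
      exact_mod_cast (zero_lt_one.trans hk).ne'
    exact numInfClusters_ne_zero_iff.1 h_ne_zero
  have fill_eq_k : ∀ᵐ ω ∂μ, ∀ x₀ x₁ y₀ y₁, IsConfig (fill (rect x₀ x₁ y₀ y₁) ω) →
      numInfClusters (fill (rect x₀ x₁ y₀ y₁) ω) conf001 = k := by
    simp only [ae_all_iff]
    exact fun _ _ _ _ => hFE.ae_imp _ _ eq_k
  obtain ⟨ω, hω, hω_k, h_upper, h_lower, h_fill⟩ := (hcfg.and <| eq_k.and <|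
    (hTI.ae_forall_exists_isUpperCorner exists_infinite).and <|
    (hTI.ae_forall_exists_isLowerCorner exists_infinite).and fill_eq_k).exists
  obtain ⟨x₀, x₁, y₀, y₁, h_config, h_le_one⟩ := exists_isConfig_fill_rect_numInfClusters_le_one
    hω (hω_k ▸ ENat.natCast_ne_top k) h_upper h_lower
  rw [h_fill _ _ _ _ h_config] at h_le_one
  exact hk.not_ge (by exact_mod_cast h_le_one)

/-- For an ergodic translation-invariant Gibbs measure, the number of infinite
`{001}`-clusters is almost surely not equal to any finite `k > 1`. -/
theorem no_finite_number_of_infinite_001_clusters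
    (a b c : ℝ) (ha : 0 < a) (hb : 0 < b) (hc : 0 < c)
    (μ : Measure Config) (hGibbs : IsGibbs a b c μ) (hTI : TransInvariant μ)
    (hErg : IsErgodicTI μ) (k : ℕ) (hk : 1 < k) :
    μ {ω : Config | numInfClusters ω conf001 = (k : ℕ∞)} = 0 :=
  have := hGibbs.1
  no_finite_number_of_infinite_001_clusters_general hGibbs.ae_isConfig
    (hGibbs.finiteEnergy ha hb hc) hTI hErg hk
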